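/- The Cayley graph of (ℤ², +) with generating set {(1,0), (0,1)} (the 2-dimensional grid) admits a decomposition into 2 edge-disjoint Hamiltonian double-rays. -/

import Mathlib

/-- The 2-dimensional grid: the Cayley graph of `ℤ²` with generators `(1,0)` and `(0,1)`. -/
def gridGraph : SimpleGraph (ℤ × ℤ) :=
  SimpleGraph.fromRel (fun u v => v = u + (1, 0) ∨ v = u + (0, 1))

/-- A Hamiltonian (spanning) double-ray: the vertex set is infinite and the graph is
connected and 2-regular. -/
def IsHamDoubleRay {V : Type*} (H : SimpleGraph V) : Prop :=
  Infinite V ∧ H.Connected ∧ ∀ v : V, (H.neighborSet v).ncard = 2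

namespace SpiralDecomposition

/-- The horizontal edge `(x, y) — (x + 1, y)` belongs to the counterclockwise double spiral.
The condition depends on which of the right, bottom, top and left sectors, cut out by the
diagonals, contains the edge. -/
def HorizontalEdge (x y : ℤ) : Prop :=
  if y ≤ x then if -x ≤ y then x % 2 = 0 else (x + y) % 2 = 1
  else if -x ≤ y then (x + y) % 2 = 0 else x % 2 = 1

/-- The counterclockwise double spiral. Its vertical edges are obtained from the horizontal ones
by reflecting in the diagonal and complementing. -/
def spiral : SimpleGraph (ℤ × ℤ) :=
  SimpleGraph.fromRel fun u v =>
    (v = u + (1, 0) ∧ HorizontalEdge u.1 u.2) ∨ (v = u + (0, 1) ∧ ¬ HorizontalEdge u.2 u.1)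

theorem gridGraph_adj_iff (x y a b : ℤ) :
    gridGraph.Adj (x, y) (a, b) ↔
      (a = x + 1 ∧ b = y) ∨ (a = x - 1 ∧ b = y) ∨ (a = x ∧ b = y + 1) ∨ (a = x ∧ b = y - 1) := by
  simp only [gridGraph, SimpleGraph.fromRel_adj, Prod.mk_add_mk, Prod.mk.injEq, ne_eq]
  omega

theorem spiral_adj_iff (x y a b : ℤ) :
    spiral.Adj (x, y) (a, b) ↔
      (a = x + 1 ∧ b = y ∧ HorizontalEdge x y) ∨ (a = x - 1 ∧ b = y ∧ HorizontalEdge (x - 1) y) ∨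
      (a = x ∧ b = y + 1 ∧ ¬ HorizontalEdge y x) ∨
      (a = x ∧ b = y - 1 ∧ ¬ HorizontalEdge (y - 1) x) := by
  simp only [spiral, SimpleGraph.fromRel_adj, Prod.mk_add_mk, Prod.mk.injEq, add_zero, ne_eq]
  constructor
  · rintro ⟨-, (⟨⟨rfl, rfl⟩, h⟩ | ⟨⟨rfl, rfl⟩, h⟩) | ⟨⟨rfl, rfl⟩, h⟩ | ⟨⟨rfl, rfl⟩, h⟩⟩ <;> simp [h]
  · rintro (⟨rfl, rfl, h⟩ | ⟨rfl, rfl, h⟩ | ⟨rfl, rfl, h⟩ | ⟨rfl, rfl, h⟩) <;>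
      simp [h] <;> omega

theorem spiral_ncard_neighborSet (v : ℤ × ℤ) : (spiral.neighborSet v).ncard = 2 := by
  obtain ⟨x, y⟩ := v
  suffices h : ∃ a b c d : ℤ, ¬ (a = c ∧ b = d) ∧
      ∀ s t, spiral.Adj (x, y) (s, t) ↔ (s = a ∧ t = b) ∨ (s = c ∧ t = d) by
    obtain ⟨a, b, c, d, hne, h⟩ := h
    refine Set.ncard_eq_two.2 ⟨(a, b), (c, d), by simpa using hne, ?_⟩
    ext ⟨s, t⟩
    simp [h]
  simp only [spiral_adj_iff]
  by_cases right : HorizontalEdge x y <;> by_cases left : HorizontalEdge (x - 1) y <;>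
    by_cases up : HorizontalEdge y x <;> by_cases down : HorizontalEdge (y - 1) x <;>
    simp only [right, left, up, down, not_true_eq_false, not_false_eq_true, and_true, and_false,
      or_false, false_or]
  all_goals first
    | (exfalso; grind [HorizontalEdge])
    | exact ⟨_, _, _, _, by omega, fun _ _ => Iff.rfl⟩

/-- The number of quarter turns made by a spiral arm before reaching `v`. -/
def quarterTurn (v : ℤ × ℤ) : ℕ :=
  if v.1 < v.2 ∧ -v.1 ≤ v.2 then (2 * ((v.2 - 1) / 2) + 1).toNat
  else if -v.1 < v.2 ∧ v.2 ≤ v.1 then (2 * (v.1 / 2)).toNat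
  else if v.1 ≤ v.2 ∧ v.2 < -v.1 then (2 * (-v.1 / 2)).toNat
  else (2 * ((-v.2 - 1) / 2) + 1).toNat

/-- A coordinate increasing along the spiral arm inside each quarter turn. -/
def progress (v : ℤ × ℤ) : ℤ :=
  (if v.1 < v.2 ∧ -v.1 ≤ v.2 then -2 * v.1
  else if -v.1 < v.2 ∧ v.2 ≤ v.1 then 2 * v.2
  else if v.1 ≤ v.2 ∧ v.2 < -v.1 then -2 * v.2
  else 2 * v.1) + (v.1 + v.2) % 2

theorem neg_le_progress (v : ℤ × ℤ) : -(2 * quarterTurn v + 4 : ℤ) ≤ progress v := by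
  unfold quarterTurn progress
  split_ifs <;> omega

theorem exists_spiral_adj_lt (v : ℤ × ℤ) (hv : v ≠ 0) :
    ∃ w, spiral.Adj w v ∧
      (quarterTurn w < quarterTurn v ∨
        quarterTurn w = quarterTurn v ∧ progress w < progress v) := by
  obtain ⟨x, y⟩ := v
  have hxy : ¬ (x = 0 ∧ y = 0) := by simpa [Prod.ext_iff] using hv
  suffices h : ∃ a b, spiral.Adj (x, y) (a, b) ∧
      (quarterTurn (a, b) < quarterTurn (x, y) ∨
        quarterTurn (a, b) = quarterTurn (x, y) ∧ progress (a, b) < progress (x, y)) by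
    obtain ⟨a, b, hadj, hlt⟩ := h
    exact ⟨(a, b), hadj.symm, hlt⟩
  simp only [spiral_adj_iff]
  have sector : (-x < y ∧ y ≤ x) ∨ (x < y ∧ -x ≤ y) ∨ (x ≤ y ∧ y < -x) ∨ (y < x ∧ y ≤ -x) := by
    omega
  rcases sector with hs | hs | hs | hs <;> rcases Int.emod_two_eq x with hx | hx <;>
    rcases Int.emod_two_eq y with hy | hy
  · exact ⟨x, y - 1, by grind [HorizontalEdge], by grind [quarterTurn, progress]⟩
  · exact ⟨x + 1, y, by grind [HorizontalEdge], by grind [quarterTurn, progress]⟩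
  · exact ⟨x - 1, y, by grind [HorizontalEdge], by grind [quarterTurn, progress]⟩
  · exact ⟨x, y - 1, by grind [HorizontalEdge], by grind [quarterTurn, progress]⟩
  · exact ⟨x + 1, y, by grind [HorizontalEdge], by grind [quarterTurn, progress]⟩
  · exact ⟨x, y + 1, by grind [HorizontalEdge], by grind [quarterTurn, progress]⟩
  · exact ⟨x, y - 1, by grind [HorizontalEdge], by grind [quarterTurn, progress]⟩
  · exact ⟨x + 1, y, by grind [HorizontalEdge], by grind [quarterTurn, progress]⟩
  · exact ⟨x, y + 1, by grind [HorizontalEdge], by grind [quarterTurn, progress]⟩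
  · exact ⟨x - 1, y, by grind [HorizontalEdge], by grind [quarterTurn, progress]⟩
  · exact ⟨x + 1, y, by grind [HorizontalEdge], by grind [quarterTurn, progress]⟩
  · exact ⟨x, y + 1, by grind [HorizontalEdge], by grind [quarterTurn, progress]⟩
  · exact ⟨x - 1, y, by grind [HorizontalEdge], by grind [quarterTurn, progress]⟩
  · exact ⟨x, y - 1, by grind [HorizontalEdge], by grind [quarterTurn, progress]⟩
  · exact ⟨x, y + 1, by grind [HorizontalEdge], by grind [quarterTurn, progress]⟩
  · exact ⟨x - 1, y, by grind [HorizontalEdge], by grind [quarterTurn, progress]⟩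

theorem spiral_reachable_zero (v : ℤ × ℤ) : spiral.Reachable v 0 := by
  by_cases hv : v = 0
  · rw [hv]
  · obtain ⟨w, hadj, hlt⟩ := exists_spiral_adj_lt v hv
    exact hadj.symm.reachable.trans (spiral_reachable_zero w)
termination_by (quarterTurn v, (progress v + (2 * quarterTurn v + 4)).toNat)
decreasing_by
  rw [Prod.lex_def]
  have := neg_le_progress v
  have := neg_le_progress w
  dsimp only
  omega

theorem spiral_isHamDoubleRay : IsHamDoubleRay spiral :=
  ⟨inferInstance, ⟨fun u v => (spiral_reachable_zero u).trans (spiral_reachable_zero v).symm⟩,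
    spiral_ncard_neighborSet⟩

theorem _root_.IsHamDoubleRay.of_iso {V W : Type*} {G : SimpleGraph V} {H : SimpleGraph W}
    (e : G ≃g H) (hH : IsHamDoubleRay H) : IsHamDoubleRay G := by
  obtain ⟨hinf, hconn, hdeg⟩ := hH
  refine ⟨e.toEquiv.infinite_iff.2 hinf, e.connected_iff.2 hconn, fun v => ?_⟩
  rw [← hdeg (e v)]
  exact Nat.card_congr (e.mapNeighborSet v)

/-- The clockwise double spiral, the mirror image of `spiral` in the diagonal. -/
def mirrorSpiral : SimpleGraph (ℤ × ℤ) :=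
  spiral.comap Prod.swap

theorem mirrorSpiral_adj_iff (x y a b : ℤ) :
    mirrorSpiral.Adj (x, y) (a, b) ↔ gridGraph.Adj (x, y) (a, b) ∧ ¬ spiral.Adj (x, y) (a, b) := by
  simp only [mirrorSpiral, SimpleGraph.comap_adj, Prod.swap_prod_mk, spiral_adj_iff,
    gridGraph_adj_iff]
  by_cases right : HorizontalEdge x y <;> by_cases left : HorizontalEdge (x - 1) y <;>
    by_cases up : HorizontalEdge y x <;> by_cases down : HorizontalEdge (y - 1) x <;>
    simp only [right, left, up, down, not_true_eq_false, not_false_eq_true, and_true, and_false,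
      or_false, false_or, or_self, false_iff] <;> omega

theorem mirrorSpiral_isHamDoubleRay : IsHamDoubleRay mirrorSpiral :=
  spiral_isHamDoubleRay.of_iso (SimpleGraph.Iso.comap (Equiv.prodComm ℤ ℤ) spiral)

theorem spiral_le_gridGraph : spiral ≤ gridGraph := by
  rintro ⟨x, y⟩ ⟨a, b⟩ h
  rw [spiral_adj_iff] at h
  rw [gridGraph_adj_iff]
  omega

theorem mirrorSpiral_eq_sdiff : mirrorSpiral = gridGraph \ spiral := by
  ext ⟨x, y⟩ ⟨a, b⟩
  rw [mirrorSpiral_adj_iff, SimpleGraph.sdiff_adj]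

end SpiralDecomposition

open SpiralDecomposition in
theorem stmt_14 :
    ∃ D : Fin 2 → SimpleGraph (ℤ × ℤ),
      (∀ i, D i ≤ gridGraph ∧ IsHamDoubleRay (D i)) ∧
      (Pairwise fun i j => Disjoint (D i).edgeSet (D j).edgeSet) ∧
      (⋃ i, (D i).edgeSet) = gridGraph.edgeSet := by
  have hdisj : Disjoint spiral.edgeSet mirrorSpiral.edgeSet := by
    rw [mirrorSpiral_eq_sdiff, SimpleGraph.edgeSet_sdiff]
    exact Set.disjoint_sdiff_right
  refine ⟨![spiral, mirrorSpiral], ?_, ?_, ?_⟩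
  · rw [Fin.forall_fin_two]
    exact ⟨⟨spiral_le_gridGraph, spiral_isHamDoubleRay⟩,
      mirrorSpiral_eq_sdiff.trans_le sdiff_le, mirrorSpiral_isHamDoubleRay⟩
  · intro i j hij
    fin_cases i <;> fin_cases j
    exacts [absurd rfl hij, hdisj, hdisj.symm, absurd rfl hij]
  · ext e
    have hsub := SimpleGraph.edgeSet_mono spiral_le_gridGraph
    simp only [Set.mem_iUnion, Fin.exists_fin_two, Matrix.cons_val_zero, Matrix.cons_val_one,
      mirrorSpiral_eq_sdiff, SimpleGraph.edgeSet_sdiff]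
    exact Set.ext_iff.1 (Set.union_sdiff_cancel hsub) e
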